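/- arXiv:2501.09731 — 3 statements merged into one kernel-verified Lean document; each statement's English description precedes it below -/
import Mathlib

section
/- In the modality-mismatch Gaussian linear model with θ ≠ 0, γ ≠ 0, and r > 0, with T_PPI++ and T_RePPI defined as in Proposition 1 (the PPI++ and recalibrated-PPI asymptotic variance traces), one has T_PPI++ − T_RePPI = (1/(1+r))·( 1/(γ^⊤Σ_Wγ) + 1/( ‖θ‖²/Tr(Σ_X^{-1}) + θ^⊤Σ_Xθ ) )^{-1} · Tr(Σ_X^{-1}), where ‖·‖ is the Euclidean norm. -/
open Matrix

/-!
With `v = γᵀ Σ_W γ`, `t = Tr Σ_X⁻¹` and `s = ‖θ‖² / t + θᵀ Σ_X θ`, the correction term of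
`T_PPI++` is `t * v ^ 2 / ((1 + r) * (v + s))`, because its denominator `‖θ‖² + t * (θᵀ Σ_X θ + v)`
is `t * (v + s)`. Subtracting `T_RePPI` thus leaves `t / (1 + r)` times `v - v ^ 2 / (v + s)`, the
variance of a component of variance `v` that remains after linear regression on its sum with an
uncorrelated component of variance `s`; this is the parallel sum `(1 / v + 1 / s)⁻¹`.
-/

section Field

variable {K : Type*} [Field K]

theorem sub_sq_div_add_eq_inv_one_div_add_one_div {a b : K} (ha : a ≠ 0) (hb : b ≠ 0)
    (hab : a + b ≠ 0) : a - a ^ 2 / (a + b) = (1 / a + 1 / b)⁻¹ :=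
  calc
    a - a ^ 2 / (a + b) = a * b / (a + b) := by
      field_simp
      ring
    _ = (1 / a + 1 / b)⁻¹ := by
      rw [div_add_div _ _ ha hb, inv_div, one_mul, mul_one, add_comm b a]

theorem ppi_plus_plus_sub_reppi_eq {r t : K} (hr : 1 + r ≠ 0) (ht : t ≠ 0)
    (noise v n q : K) :
    ((noise + v) * t - 1 / (1 + r) * (t * v) ^ 2 / (n + t * (q + v)))
        - (noise + r / (1 + r) * v) * t
      = 1 / (1 + r) * (v - v ^ 2 / (v + (n / t + q))) * t := by
  have hden : n + t * (q + v) = t * (v + (n / t + q)) := by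
    field_simp
    ring
  have hcorrection : (t * v) ^ 2 / (t * (v + (n / t + q)))
      = t * (v ^ 2 / (v + (n / t + q))) := by
    rw [mul_pow, sq t, mul_assoc, mul_div_mul_left _ _ ht, mul_div_assoc]
  have hweight : r / (1 + r) = 1 - 1 / (1 + r) := by
    field_simp
    ring
  rw [hden, mul_div_assoc, hcorrection, hweight]
  ring

end Field

-- `v` is the variance of the prediction `Ŷ`, the only feature of `W` that enters either trace.
theorem modality_mismatch_gain_general {ι : Type*} [Fintype ι] [DecidableEq ι]
    {Sx : Matrix ι ι ℝ} (hSx : Sx.PosDef) {θ : ι → ℝ} (hθ : θ ≠ 0)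
    {v σ r TPP TRe : ℝ} (hv : 0 < v) (hr : 1 + r ≠ 0)
    (hTPP : TPP = (σ ^ 2 + v) * Sx⁻¹.trace
        - (1 / (1 + r)) * (Sx⁻¹.trace * v) ^ 2
          / ((∑ i, θ i ^ 2) + Sx⁻¹.trace * (θ ⬝ᵥ Sx *ᵥ θ + v)))
    (hTRe : TRe = (σ ^ 2 + (r / (1 + r)) * v) * Sx⁻¹.trace) :
    TPP - TRe
      = (1 / (1 + r)) * (1 / v + 1 / ((∑ i, θ i ^ 2) / Sx⁻¹.trace + θ ⬝ᵥ Sx *ᵥ θ))⁻¹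
        * Sx⁻¹.trace := by
  obtain ⟨i, -⟩ := Function.ne_iff.mp hθ
  have : Nonempty ι := ⟨i⟩
  have htrace : 0 < Sx⁻¹.trace := hSx.inv.trace_pos
  have hquad : 0 < θ ⬝ᵥ Sx *ᵥ θ := by simpa using hSx.dotProduct_mulVec_pos hθ
  have hsignal : 0 < (∑ i, θ i ^ 2) / Sx⁻¹.trace + θ ⬝ᵥ Sx *ᵥ θ := by positivity
  rw [hTPP, hTRe, ppi_plus_plus_sub_reppi_eq hr htrace.ne',
    sub_sq_div_add_eq_inv_one_div_add_one_div hv.ne' hsignal.ne' (add_pos hv hsignal).ne']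

/-- STATEMENT 12 (efficiency gain of RePPI over PPI++, Proposition 1, modality
mismatch), stated with the closed forms of `T_PPI++` and `T_RePPI` established in
Proposition 1. -/
theorem modality_mismatch_gain
    {d m : ℕ}
    (Sx : Matrix (Fin d) (Fin d) ℝ) (hSx : Sx.PosDef)
    (Sw : Matrix (Fin m) (Fin m) ℝ) (hSw : Sw.PosDef)
    (σ : ℝ) (hσ : 0 < σ)
    (θ : Fin d → ℝ) (hθ : θ ≠ 0) (γ : Fin m → ℝ) (hγ : γ ≠ 0)
    (r : ℝ) (hr : 0 < r)
    (TPP TRe : ℝ)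
    (hTPP : TPP = (σ ^ 2 + γ ⬝ᵥ Sw *ᵥ γ) * Sx⁻¹.trace
        - (1 / (1 + r)) * (Sx⁻¹.trace * (γ ⬝ᵥ Sw *ᵥ γ)) ^ 2
          / ((∑ i, θ i ^ 2) + Sx⁻¹.trace * (θ ⬝ᵥ Sx *ᵥ θ + γ ⬝ᵥ Sw *ᵥ γ)))
    (hTRe : TRe = (σ ^ 2 + (r / (1 + r)) * (γ ⬝ᵥ Sw *ᵥ γ)) * Sx⁻¹.trace) :
    TPP - TRe
      = (1 / (1 + r)) * (1 / (γ ⬝ᵥ Sw *ᵥ γ) + 1 / ((∑ i, θ i ^ 2) / Sx⁻¹.trace + θ ⬝ᵥ Sx *ᵥ θ))⁻¹ * Sx⁻¹.trace :=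
  modality_mismatch_gain_general hSx hθ (by simpa using hSw.dotProduct_mulVec_pos hγ)
    (by positivity) hTPP hTRe
end

section
/- In the three-component Gaussian mixture model, for every r > 0 the following hold, writing S := (μ₁ − μ₂)² + (μ₂ − μ₃)² + (μ₃ − μ₁)²: (i) Var(Y) = σ² + S/9; (ii) Var(Y − Z) + r·Var(Z) = Var(Y) + 2(1+r)/3 − 2(μ₃ − μ₁)/3; (iii) Var(Y) − (1/(1+r))·Cov(Y, Z)²/Var(Z) = Var(Y) − (1/(1+r))·(μ₃ − μ₁)²/6; and (iv) Var(Y) − (1/(1+r))·Var(E[Y | σ(Z)]) = Var(Y) − (1/(1+r))·S/9, where Var denotes variance, Cov(Y, Z) := E[(Y − E Y)(Z − E Z)], and E[Y | σ(Z)] is the conditional expectation of Y given the σ-algebra generated by Z. -/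
open MeasureTheory ProbabilityTheory Matrix

/-!
Write `Y = f(Z) + ε`. All that matters about the noise is that `E[ε | Z] = 0`: this makes `ε`
uncorrelated with every square-integrable function of `Z`, so `Var Y = Var f(Z) + Var ε` and
`Cov(Y, g(Z)) = Cov(f(Z), g(Z))`, while `E[Y | Z] = f(Z)`. What remains are covariances of functions
of a uniform variable on `n` points, which are averages over pairs,
`Cov(f(Z), g(Z)) = (1 / 2n²) ∑ᵢⱼ (fᵢ - fⱼ)(gᵢ - gⱼ)`; this is where `S / 9` and `(μ₃ - μ₁) / 3`
come from.
-/

section ConditionallyCenteredNoise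

variable {Ω : Type*} {m mΩ : MeasurableSpace Ω} {P : Measure Ω} {X W ε : Ω → ℝ}

lemma condExp_comap_eq_zero_of_indepFun {β E : Type*} [MeasurableSpace β]
    [NormedAddCommGroup E] [NormedSpace ℝ E] [CompleteSpace E] [SecondCountableTopology E]
    [MeasurableSpace E] [BorelSpace E] [IsFiniteMeasure P] {Z : Ω → β} {ξ : Ω → E}
    (hZ : Measurable Z) (hξ : Measurable ξ) (hind : IndepFun Z ξ P) (hξ0 : P[ξ] = 0) :
    P[ξ | MeasurableSpace.comap Z inferInstance] =ᵐ[P] 0 := by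
  filter_upwards [condExp_indep_eq hξ.comap_le hZ.comap_le
    (comap_measurable ξ).stronglyMeasurable hind.symm] with ω h
  rw [h, hξ0, Pi.zero_apply]

lemma condExp_add_of_condExp_eq_zero [IsFiniteMeasure P] (hm : m ≤ mΩ)
    (hXm : StronglyMeasurable[m] X) (hX : Integrable X P) (hε : Integrable ε P)
    (hε0 : P[ε | m] =ᵐ[P] 0) :
    P[X + ε | m] =ᵐ[P] X := by
  filter_upwards [condExp_add hX hε m, hε0] with ω hadd h0
  rw [hadd, Pi.add_apply, h0, condExp_of_stronglyMeasurable hm hXm hX, Pi.zero_apply, add_zero]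

lemma covariance_eq_zero_of_condExp_eq_zero [IsProbabilityMeasure P] (hm : m ≤ mΩ)
    (hXm : StronglyMeasurable[m] X) (hX : MemLp X 2 P) (hε : MemLp ε 2 P)
    (hε0 : P[ε | m] =ᵐ[P] 0) :
    cov[X, ε; P] = 0 := by
  have hmean : P[ε] = 0 := by
    rw [← integral_condExp hm, integral_congr_ae hε0, integral_zero']
  have hprod : P[X * ε | m] =ᵐ[P] 0 := by
    filter_upwards [condExp_mul_of_stronglyMeasurable_left hXm (hX.integrable_mul hε)
      (hε.integrable one_le_two), hε0] with ω hpull h0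
    rw [hpull, Pi.mul_apply, h0, Pi.zero_apply, mul_zero]
  rw [covariance_eq_sub hX hε, hmean, mul_zero, sub_zero, ← integral_condExp hm,
    integral_congr_ae hprod, integral_zero']

lemma covariance_add_left_of_condExp_eq_zero [IsProbabilityMeasure P] (hm : m ≤ mΩ)
    (hX : MemLp X 2 P) (hWm : StronglyMeasurable[m] W) (hW : MemLp W 2 P) (hε : MemLp ε 2 P)
    (hε0 : P[ε | m] =ᵐ[P] 0) :
    cov[X + ε, W; P] = cov[X, W; P] := by
  rw [covariance_add_left hX hε hW, covariance_comm ε,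
    covariance_eq_zero_of_condExp_eq_zero hm hWm hW hε hε0, add_zero]

lemma variance_add_of_condExp_eq_zero [IsProbabilityMeasure P] (hm : m ≤ mΩ)
    (hXm : StronglyMeasurable[m] X) (hX : MemLp X 2 P) (hε : MemLp ε 2 P)
    (hε0 : P[ε | m] =ᵐ[P] 0) :
    Var[X + ε; P] = Var[X; P] + Var[ε; P] := by
  rw [variance_add hX hε, covariance_eq_zero_of_condExp_eq_zero hm hXm hX hε hε0, mul_zero,
    add_zero]

end ConditionallyCenteredNoise

lemma sum_sum_sub_mul_sub {ι R : Type*} [Fintype ι] [CommRing R] (f g : ι → R) :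
    ∑ i, ∑ j, (f i - f j) * (g i - g j)
      = 2 * (Fintype.card ι * ∑ i, f i * g i - (∑ i, f i) * ∑ i, g i) := by
  have hexpand (i j : ι) :
      (f i - f j) * (g i - g j) = f i * g i - f i * g j - g i * f j + f j * g j := by ring
  simp only [hexpand, Finset.sum_add_distrib, Finset.sum_sub_distrib, ← Finset.sum_mul_sum,
    Finset.sum_const, Finset.card_univ, nsmul_eq_mul]
  simp only [← Finset.mul_sum]
  ring

section UniformLabel

variable {Ω α : Type*} [MeasurableSpace Ω] {P : Measure Ω}
  [MeasurableSpace α] [MeasurableSingletonClass α] {Z : Ω → α}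

lemma memLp_comp_of_finite [Finite α] [IsFiniteMeasure P] (hZm : Measurable Z) (f : α → ℝ)
    (p : ENNReal) : MemLp (fun ω ↦ f (Z ω)) p P :=
  MemLp.of_discrete.comp_of_map hZm.aemeasurable

variable [Fintype α]

lemma integral_comp_of_uniform [IsFiniteMeasure P] (hZm : Measurable Z)
    (hZ : ∀ k, P {ω | Z ω = k} = 1 / Fintype.card α) (f : α → ℝ) :
    ∫ ω, f (Z ω) ∂P = (∑ k, f k) / Fintype.card α := by
  have hmass (k : α) : (P.map Z).real {k} = (Fintype.card α : ℝ)⁻¹ := by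
    rw [map_measureReal_apply hZm (measurableSet_singleton k)]
    exact (congrArg ENNReal.toReal (hZ k)).trans (by simp)
  rw [← integral_map hZm.aemeasurable .of_discrete, integral_fintype .of_finite]
  simp only [hmass, smul_eq_mul, ← Finset.mul_sum]
  rw [inv_mul_eq_div]

lemma covariance_comp_of_uniform [IsProbabilityMeasure P] (hZm : Measurable Z)
    (hZ : ∀ k, P {ω | Z ω = k} = 1 / Fintype.card α) (f g : α → ℝ) :
    cov[fun ω ↦ f (Z ω), fun ω ↦ g (Z ω); P]
      = (∑ i, ∑ j, (f i - f j) * (g i - g j)) / (2 * (Fintype.card α : ℝ) ^ 2) := by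
  have : Nonempty α := P.nonempty_of_neZero.map Z
  have hprod : P[(fun ω ↦ f (Z ω)) * fun ω ↦ g (Z ω)] = (∑ k, f k * g k) / Fintype.card α :=
    integral_comp_of_uniform hZm hZ fun k ↦ f k * g k
  rw [covariance_eq_sub (memLp_comp_of_finite hZm f 2) (memLp_comp_of_finite hZm g 2), hprod,
    integral_comp_of_uniform hZm hZ, integral_comp_of_uniform hZm hZ, sum_sum_sub_mul_sub]
  field_simp

end UniformLabel

section UniformFinThree

variable {Ω : Type*} [MeasurableSpace Ω] {P : Measure Ω} [IsProbabilityMeasure P] {Z : Ω → Fin 3}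

lemma covariance_comp_of_uniform_fin_three (hZm : Measurable Z)
    (hZ : ∀ k, P {ω | Z ω = k} = 1 / 3) (f g : Fin 3 → ℝ) :
    cov[fun ω ↦ f (Z ω), fun ω ↦ g (Z ω); P]
      = ((f 0 - f 1) * (g 0 - g 1) + (f 1 - f 2) * (g 1 - g 2)
          + (f 2 - f 0) * (g 2 - g 0)) / 9 := by
  rw [covariance_comp_of_uniform hZm (by simpa using hZ), Fintype.card_fin]
  simp only [Fin.sum_univ_three]
  ring

lemma variance_comp_of_uniform_fin_three (hZm : Measurable Z)
    (hZ : ∀ k, P {ω | Z ω = k} = 1 / 3) (f : Fin 3 → ℝ) :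
    Var[fun ω ↦ f (Z ω); P]
      = ((f 0 - f 1) ^ 2 + (f 1 - f 2) ^ 2 + (f 2 - f 0) ^ 2) / 9 := by
  rw [← covariance_self (memLp_comp_of_finite hZm f 2).aemeasurable,
    covariance_comp_of_uniform_fin_three hZm hZ]
  simp only [sq]

end UniformFinThree

/-- `w` stands for the weight `1 / (1 + r)` of the asymptotic variances. -/
theorem gaussian_mixture_variances_general
    {Ω : Type*} [MeasurableSpace Ω] (P : Measure Ω) [IsProbabilityMeasure P]
    (μ1 μ2 μ3 : ℝ) (Z : Ω → Fin 3) (ε : Ω → ℝ)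
    (hZm : Measurable Z) (hZ : ∀ k : Fin 3, P {ω | Z ω = k} = 1 / 3)
    (hε : MemLp ε 2 P) (hε0 : P[ε | MeasurableSpace.comap Z inferInstance] =ᵐ[P] 0)
    (Y Zr : Ω → ℝ)
    (hY : Y = fun ω => ![μ1, μ2, μ3] (Z ω) + ε ω)
    (hZr : Zr = fun ω => ((Z ω).val : ℝ) + 1)
    (S : ℝ) (hS : S = (μ1 - μ2) ^ 2 + (μ2 - μ3) ^ 2 + (μ3 - μ1) ^ 2)
    (r w : ℝ) :
    Var[Y; P] = Var[ε; P] + S / 9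
    ∧ Var[fun ω => Y ω - Zr ω; P] + r * Var[Zr; P]
        = Var[Y; P] + 2 * (1 + r) / 3 - 2 * (μ3 - μ1) / 3
    ∧ Var[Y; P] - w * cov[Y, Zr; P] ^ 2 / Var[Zr; P] = Var[Y; P] - w * (μ3 - μ1) ^ 2 / 6
    ∧ Var[Y; P] - w * Var[P[Y | MeasurableSpace.comap Z inferInstance]; P]
        = Var[Y; P] - w * S / 9 := by
  let M : Ω → ℝ := fun ω ↦ ![μ1, μ2, μ3] (Z ω)
  have hYadd : Y = M + ε := hY
  have hmeas (f : Fin 3 → ℝ) :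
      StronglyMeasurable[MeasurableSpace.comap Z inferInstance] fun ω ↦ f (Z ω) :=
    ((measurable_of_finite f).comp (comap_measurable Z)).stronglyMeasurable
  have hM : MemLp M 2 P := memLp_comp_of_finite hZm _ 2
  have hZr2 : MemLp Zr 2 P := hZr ▸ memLp_comp_of_finite hZm (fun k ↦ (k.val : ℝ) + 1) 2
  have hvarM : Var[M; P] = S / 9 := hS ▸ variance_comp_of_uniform_fin_three hZm hZ _
  have hvarZ : Var[Zr; P] = 2 / 3 := by
    rw [hZr, variance_comp_of_uniform_fin_three hZm hZ fun k ↦ (k.val : ℝ) + 1]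
    norm_num
  have hcov : cov[Y, Zr; P] = (μ3 - μ1) / 3 := by
    rw [hYadd, covariance_add_left_of_condExp_eq_zero hZm.comap_le hM
      (hZr ▸ hmeas fun k ↦ (k.val : ℝ) + 1) hZr2 hε hε0, hZr,
      covariance_comp_of_uniform_fin_three hZm hZ _ fun k ↦ (k.val : ℝ) + 1]
    simp only [Fin.val_zero, Fin.val_one, Fin.val_two, Nat.cast_zero, Nat.cast_one,
      Nat.cast_ofNat, cons_val]
    ring
  have hcond : Var[P[Y | MeasurableSpace.comap Z inferInstance]; P] = S / 9 := by
    rw [hYadd, variance_congr (condExp_add_of_condExp_eq_zero hZm.comap_le (hmeas _)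
      (hM.integrable one_le_two) (hε.integrable one_le_two) hε0), hvarM]
  refine ⟨?_, ?_, ?_, ?_⟩
  · rw [hYadd, variance_add_of_condExp_eq_zero hZm.comap_le (hmeas _) hM hε hε0, hvarM, add_comm]
  · rw [variance_fun_sub (hYadd ▸ hM.add hε) hZr2, hcov, hvarZ]; ring
  · rw [hcov, hvarZ]; ring
  · rw [hcond]; ring

/-- Proposition 3, discrete predictions: the four asymptotic variance
formulas (XY-only, PPI, PPI++, recalibrated PPI) in the three-component Gaussian
mixture model, writing `S = (μ₁−μ₂)² + (μ₂−μ₃)² + (μ₃−μ₁)²`. -/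
theorem gaussian_mixture_variances
    {Ω : Type*} [MeasurableSpace Ω] (P : Measure Ω) [IsProbabilityMeasure P]
    (μ1 μ2 μ3 : ℝ) (σ : ℝ) (hσ : 0 < σ)
    (Z : Ω → Fin 3) (ξ : Ω → ℝ)
    (hZm : Measurable Z) (hξm : Measurable ξ)
    (hZ : ∀ k : Fin 3, P {ω | Z ω = k} = 1 / 3)
    (hξ : P.map ξ = gaussianReal 0 1)
    (hInd : IndepFun Z ξ P)
    (Y Zr : Ω → ℝ)
    (hY : Y = fun ω => ![μ1, μ2, μ3] (Z ω) + σ * ξ ω)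
    (hZr : Zr = fun ω => ((Z ω).val : ℝ) + 1)
    (S : ℝ) (hS : S = (μ1 - μ2) ^ 2 + (μ2 - μ3) ^ 2 + (μ3 - μ1) ^ 2)
    (r : ℝ) (hr : 0 < r) :
    variance Y P = σ ^ 2 + S / 9
    ∧ variance (fun ω => Y ω - Zr ω) P + r * variance Zr P
        = variance Y P + 2 * (1 + r) / 3 - 2 * (μ3 - μ1) / 3
    ∧ variance Y P - (1 / (1 + r)) * (∫ ω, (Y ω - ∫ ω', Y ω' ∂P) * (Zr ω - ∫ ω', Zr ω' ∂P) ∂P) ^ 2 / variance Zr P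
        = variance Y P - (1 / (1 + r)) * (μ3 - μ1) ^ 2 / 6
    ∧ variance Y P - (1 / (1 + r)) * variance (P[Y | MeasurableSpace.comap Z inferInstance]) P
        = variance Y P - (1 / (1 + r)) * S / 9 := by
  have hlaw : HasLaw (fun ω ↦ σ * ξ ω) (gaussianReal (σ * 0) (.mk (σ ^ 2) (sq_nonneg σ) * 1)) P :=
    gaussianReal_const_mul ⟨hξm.aemeasurable, hξ⟩ σ
  have hmean : ∫ ω, σ * ξ ω ∂P = 0 := by
    rw [hlaw.integral_eq, integral_id_gaussianReal, mul_zero]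
  have hvar : Var[fun ω ↦ σ * ξ ω; P] = σ ^ 2 := by simp [hlaw.variance_eq]
  have hind : IndepFun Z (fun ω ↦ σ * ξ ω) P := hInd.comp measurable_id (measurable_const_mul σ)
  exact hvar ▸ gaussian_mixture_variances_general P μ1 μ2 μ3 Z (fun ω ↦ σ * ξ ω) hZm hZ
    hlaw.hasGaussianLaw.memLp_two
    (condExp_comap_eq_zero_of_indepFun hZm (hξm.const_mul σ) hind hmean)
    Y Zr hY hZr S hS r (1 / (1 + r))
end

section
/- In the three-component Gaussian mixture model, for every r > 0, [Var(Y) − (1/(1+r))·Cov(Y, Z)²/Var(Z)] − [Var(Y) − (1/(1+r))·Var(E[Y | σ(Z)])] = (2μ₂ − μ₃ − μ₁)² / (18·(1+r)), and in particular this difference is nonnegative; here Var denotes variance, Cov(Y, Z) := E[(Y − E Y)(Z − E Z)], and E[Y | σ(Z)] is the conditional expectation of Y given the σ-algebra generated by Z. -/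
open MeasureTheory ProbabilityTheory Matrix

/-!
Conditioning on `Z` does not change covariances with functions of `Z`, so the gap depends on `Y`
only through its conditional means `m`: up to the factor `1 / (1 + r)` it is the part of the
variance of `m` under the uniform law on three points that linear regression on the rank leaves
unexplained. The centred functions on three points are spanned by the orthogonal contrasts
`(-1, 0, 1)` and `(1, -2, 1)`. Regression on the rank removes the first one, and the second one
contributes `(2 * m 1 - m 2 - m 0) ^ 2 / 18`.
-/

section UniformLaw

variable {α : Type*} [MeasurableSpace α] [MeasurableSingletonClass α] [Fintype α]

lemma uniformOn_univ_singleton (a : α) :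
    uniformOn (Set.univ : Set α) {a} = 1 / Fintype.card α := by
  rw [uniformOn_univ, Measure.count_singleton]

lemma integral_uniformOn_univ {E : Type*} [NormedAddCommGroup E] [NormedSpace ℝ E]
    [CompleteSpace E] (f : α → E) :
    ∫ a, f a ∂uniformOn Set.univ = (Fintype.card α : ℝ)⁻¹ • ∑ a, f a := by
  rw [integral_fintype Integrable.of_finite, Finset.smul_sum]
  simp only [measureReal_def, uniformOn_univ_singleton, one_div, ENNReal.toReal_inv,
    ENNReal.toReal_natCast]

lemma hasLaw_uniformOn_univ {Ω : Type*} [MeasurableSpace Ω] {P : Measure Ω} {Z : Ω → α}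
    (hZm : AEMeasurable Z P) (hZ : ∀ a, P {ω | Z ω = a} = 1 / Fintype.card α) :
    HasLaw Z (uniformOn Set.univ) P where
  aemeasurable := hZm
  map_eq := Measure.ext_of_singleton fun a ↦ by
    rw [Measure.map_apply_of_aemeasurable hZm (measurableSet_singleton a),
      uniformOn_univ_singleton]
    exact hZ a

lemma covariance_uniformOn_univ_fin_three (f g : Fin 3 → ℝ) :
    cov[f, g; uniformOn Set.univ]
      = (f 2 - f 0) * (g 2 - g 0) / 6
        + (2 * f 1 - f 2 - f 0) * (2 * g 1 - g 2 - g 0) / 18 := by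
  simp only [covariance, integral_uniformOn_univ, Fin.sum_univ_three, Fintype.card_fin, smul_eq_mul]
  push_cast
  ring

variable {Ω : Type*} [MeasurableSpace Ω] {P : Measure Ω} {Z : Ω → Fin 3}

lemma covariance_comp_of_hasLaw_uniformOn_fin_three (hZ : HasLaw Z (uniformOn Set.univ) P)
    (f g : Fin 3 → ℝ) :
    cov[fun ω ↦ f (Z ω), fun ω ↦ g (Z ω); P]
      = (f 2 - f 0) * (g 2 - g 0) / 6
        + (2 * f 1 - f 2 - f 0) * (2 * g 1 - g 2 - g 0) / 18 := by
  rw [hZ.covariance_fun_comp (measurable_of_finite f).aemeasurable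
    (measurable_of_finite g).aemeasurable, covariance_uniformOn_univ_fin_three]

lemma variance_comp_of_hasLaw_uniformOn_fin_three (hZ : HasLaw Z (uniformOn Set.univ) P)
    (f : Fin 3 → ℝ) :
    Var[fun ω ↦ f (Z ω); P] = (f 2 - f 0) ^ 2 / 6 + (2 * f 1 - f 2 - f 0) ^ 2 / 18 := by
  rw [← covariance_self ((measurable_of_finite f).comp_aemeasurable' hZ.aemeasurable),
    covariance_comp_of_hasLaw_uniformOn_fin_three hZ]
  ring

end UniformLaw

section Conditioning

variable {Ω : Type*} {mΩ : MeasurableSpace Ω} {P : Measure Ω}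

lemma covariance_congr_left {X X' W : Ω → ℝ} (h : X =ᵐ[P] X') : cov[X, W; P] = cov[X', W; P] := by
  rw [covariance, covariance, integral_congr_ae h]
  exact integral_congr_ae (by filter_upwards [h] with ω hω; rw [hω])

lemma covariance_condExp_left [IsFiniteMeasure P] {𝓖 : MeasurableSpace Ω} (h𝓖 : 𝓖 ≤ mΩ)
    {X W : Ω → ℝ} (hX : MemLp X 2 P) (hW : MemLp W 2 P) (hW𝓖 : AEStronglyMeasurable[𝓖] W P) :
    cov[P[X | 𝓖], W; P] = cov[X, W; P] := by
  set X₀ : Ω → ℝ := X - fun _ ↦ P[X]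
  set W₀ : Ω → ℝ := W - fun _ ↦ P[W]
  have hX₀ : MemLp X₀ 2 P := hX.sub (memLp_const _)
  have hW₀ : MemLp W₀ 2 P := hW.sub (memLp_const _)
  have hW₀𝓖 : AEStronglyMeasurable[𝓖] W₀ P := hW𝓖.sub aestronglyMeasurable_const
  have condExp_centred : P[X₀ | 𝓖] =ᵐ[P] P[X | 𝓖] - fun _ ↦ P[X] := by
    simpa only [condExp_const h𝓖] using
      condExp_sub (hX.integrable one_le_two) (integrable_const P[X]) 𝓖
  have pull_out : P[X₀ * W₀ | 𝓖] =ᵐ[P] P[X₀ | 𝓖] * W₀ :=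
    condExp_mul_of_aestronglyMeasurable_right hW₀𝓖 (hX₀.integrable_mul hW₀)
      (hX₀.integrable one_le_two)
  calc cov[P[X | 𝓖], W; P]
      = ∫ ω, (P[X | 𝓖] ω - P[X]) * W₀ ω ∂P := by
        rw [covariance, integral_condExp h𝓖]
        rfl
    _ = ∫ ω, P[X₀ * W₀ | 𝓖] ω ∂P :=
        integral_congr_ae ((condExp_centred.symm.mul .rfl).trans pull_out.symm)
    _ = cov[X, W; P] := integral_condExp h𝓖

lemma condExp_comp_add_of_indepFun [IsFiniteMeasure P] {β E : Type*} [MeasurableSpace β]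
    [NormedAddCommGroup E] [NormedSpace ℝ E] [CompleteSpace E] [MeasurableSpace E] [BorelSpace E]
    [SecondCountableTopology E] {Z : Ω → β} {g : β → E} {ξ : Ω → E} (hZ : Measurable Z)
    (hg : Measurable g) (hgZ : Integrable (fun ω ↦ g (Z ω)) P) (hξm : Measurable ξ)
    (hξ : Integrable ξ P) (hZξ : IndepFun Z ξ P) :
    P[fun ω ↦ g (Z ω) + ξ ω | MeasurableSpace.comap Z inferInstance]
      =ᵐ[P] fun ω ↦ g (Z ω) + P[ξ] := by
  have signal : P[fun ω ↦ g (Z ω) | MeasurableSpace.comap Z inferInstance] = fun ω ↦ g (Z ω) :=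
    condExp_of_stronglyMeasurable hZ.comap_le
      (hg.comp (comap_measurable Z)).stronglyMeasurable hgZ
  have noise : P[ξ | MeasurableSpace.comap Z inferInstance] =ᵐ[P] fun _ ↦ P[ξ] :=
    condExp_indep_eq hξm.comap_le hZ.comap_le (comap_measurable ξ).stronglyMeasurable
      ((IndepFun_iff_Indep _ _ _).1 hZξ.symm)
  filter_upwards [condExp_add hgZ hξ (MeasurableSpace.comap Z inferInstance), noise]
    with ω condExp_sum condExp_noise
  calc P[fun ω ↦ g (Z ω) + ξ ω | MeasurableSpace.comap Z inferInstance] ω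
      = P[fun ω ↦ g (Z ω) | MeasurableSpace.comap Z inferInstance] ω
        + P[ξ | MeasurableSpace.comap Z inferInstance] ω := condExp_sum
    _ = g (Z ω) + P[ξ] := by rw [signal, condExp_noise]

lemma condExp_comp_add_mul_gaussian {β : Type*} [MeasurableSpace β] {Z : Ω → β} {g : β → ℝ}
    {ξ : Ω → ℝ} {v : NNReal} (hZ : Measurable Z) (hg : Measurable g)
    (hgZ : Integrable (fun ω ↦ g (Z ω)) P) (hξm : Measurable ξ)
    (hξ : HasLaw ξ (gaussianReal 0 v) P) (hZξ : IndepFun Z ξ P) (σ : ℝ) :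
    P[fun ω ↦ g (Z ω) + σ * ξ ω | MeasurableSpace.comap Z inferInstance]
      =ᵐ[P] fun ω ↦ g (Z ω) := by
  have : IsProbabilityMeasure P := hξ.isProbabilityMeasure
  have noise_mean : ∫ ω, σ * ξ ω ∂P = 0 := by
    rw [integral_const_mul, hξ.integral_eq, integral_id_gaussianReal, mul_zero]
  simpa only [noise_mean, add_zero] using
    condExp_comp_add_of_indepFun hZ hg hgZ (hξm.const_mul σ)
      (hξ.hasGaussianLaw.integrable.const_mul σ)
      (hZξ.comp measurable_id (measurable_const_mul σ))

end Conditioning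

theorem gaussian_mixture_gap_general
    {Ω : Type*} [MeasurableSpace Ω] {P : Measure Ω} [IsProbabilityMeasure P]
    {Z : Ω → Fin 3} (hZm : Measurable Z) (hZ : ∀ k : Fin 3, P {ω | Z ω = k} = 1 / 3)
    {Y Zr : Ω → ℝ} (hY : MemLp Y 2 P) (hZr : Zr = fun ω ↦ ((Z ω).val : ℝ) + 1)
    {m : Fin 3 → ℝ}
    (hm : P[Y | MeasurableSpace.comap Z inferInstance] =ᵐ[P] fun ω ↦ m (Z ω))
    {r : ℝ} (hr : -1 < r) :
    (Var[Y; P] - (1 / (1 + r)) * cov[Y, Zr; P] ^ 2 / Var[Zr; P])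
        - (Var[Y; P] - (1 / (1 + r)) * Var[P[Y | MeasurableSpace.comap Z inferInstance]; P])
      = (2 * m 1 - m 2 - m 0) ^ 2 / (18 * (1 + r))
    ∧ 0 ≤ (Var[Y; P] - (1 / (1 + r)) * cov[Y, Zr; P] ^ 2 / Var[Zr; P])
        - (Var[Y; P] - (1 / (1 + r)) * Var[P[Y | MeasurableSpace.comap Z inferInstance]; P]) := by
  have law : HasLaw Z (uniformOn Set.univ) P :=
    hasLaw_uniformOn_univ hZm.aemeasurable (by simpa using hZ)
  let rank : Fin 3 → ℝ := fun k ↦ (k.val : ℝ) + 1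
  have rank_linear : rank 2 - rank 0 = 2 := by norm_num [rank]
  have rank_quadratic : 2 * rank 1 - rank 2 - rank 0 = 0 := by norm_num [rank]
  have rank_memLp : MemLp Zr 2 P := by
    rw [hZr]
    exact (MemLp.of_discrete (f := rank)).comp_of_map hZm.aemeasurable
  have rank_measurable : AEStronglyMeasurable[MeasurableSpace.comap Z inferInstance] Zr P := by
    rw [hZr]
    exact ((measurable_of_finite rank).comp
      (comap_measurable Z)).stronglyMeasurable.aestronglyMeasurable
  have cov_eq : cov[Y, Zr; P] = (m 2 - m 0) / 3 := by
    rw [← covariance_condExp_left hZm.comap_le hY rank_memLp rank_measurable,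
      covariance_congr_left hm, hZr, covariance_comp_of_hasLaw_uniformOn_fin_three law m rank,
      rank_linear, rank_quadratic]
    ring
  have var_rank : Var[Zr; P] = 2 / 3 := by
    rw [hZr, variance_comp_of_hasLaw_uniformOn_fin_three law rank, rank_linear,
      rank_quadratic]
    norm_num
  have var_condExp : Var[P[Y | MeasurableSpace.comap Z inferInstance]; P]
      = (m 2 - m 0) ^ 2 / 6 + (2 * m 1 - m 2 - m 0) ^ 2 / 18 := by
    rw [variance_congr hm, variance_comp_of_hasLaw_uniformOn_fin_three law]
  have one_add_pos : 0 < 1 + r := by linarith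
  refine (and_iff_left_of_imp fun gap ↦ gap ▸ by positivity).2 ?_
  rw [cov_eq, var_rank, var_condExp]
  field_simp
  ring

/-- Proposition 3, discrete predictions: the efficiency gap between
PPI++ and recalibrated PPI equals `(2μ₂ − μ₃ − μ₁)²/(18(1+r)) ≥ 0`. -/
theorem gaussian_mixture_gap
    {Ω : Type*} [MeasurableSpace Ω] (P : Measure Ω) [IsProbabilityMeasure P]
    (μ1 μ2 μ3 : ℝ) (σ : ℝ) (hσ : 0 < σ)
    (Z : Ω → Fin 3) (ξ : Ω → ℝ)
    (hZm : Measurable Z) (hξm : Measurable ξ)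
    (hZ : ∀ k : Fin 3, P {ω | Z ω = k} = 1 / 3)
    (hξ : P.map ξ = gaussianReal 0 1)
    (hInd : IndepFun Z ξ P)
    (Y Zr : Ω → ℝ)
    (hY : Y = fun ω => ![μ1, μ2, μ3] (Z ω) + σ * ξ ω)
    (hZr : Zr = fun ω => ((Z ω).val : ℝ) + 1)
    (r : ℝ) (hr : 0 < r) :
    (variance Y P - (1 / (1 + r)) * (∫ ω, (Y ω - ∫ ω', Y ω' ∂P) * (Zr ω - ∫ ω', Zr ω' ∂P) ∂P) ^ 2 / variance Zr P)
        - (variance Y P - (1 / (1 + r)) * variance (P[Y | MeasurableSpace.comap Z inferInstance]) P)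
      = (2 * μ2 - μ3 - μ1) ^ 2 / (18 * (1 + r))
    ∧ 0 ≤ (variance Y P - (1 / (1 + r)) * (∫ ω, (Y ω - ∫ ω', Y ω' ∂P) * (Zr ω - ∫ ω', Zr ω' ∂P) ∂P) ^ 2 / variance Zr P)
        - (variance Y P - (1 / (1 + r)) * variance (P[Y | MeasurableSpace.comap Z inferInstance]) P) := by
  have noise_law : HasLaw ξ (gaussianReal 0 1) P := ⟨hξm.aemeasurable, hξ⟩
  have mean_memLp : MemLp (fun ω ↦ ![μ1, μ2, μ3] (Z ω)) 2 P :=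
    MemLp.of_discrete.comp_of_map hZm.aemeasurable
  subst hY
  exact gaussian_mixture_gap_general hZm hZ
    (mean_memLp.add (noise_law.hasGaussianLaw.memLp_two.const_mul σ)) hZr
    (condExp_comp_add_mul_gaussian hZm (measurable_of_finite _) (mean_memLp.integrable one_le_two)
      hξm noise_law hInd σ)
    (by linarith)
end
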